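/- arXiv:math/0503033 — 4 statements merged into one kernel-verified Lean document; each statement's English description precedes it below -/
import Mathlib

section
/- The map f : ℝ³ → ℝ⁴ is infinitely differentiable (C^∞), and at every point (q,p,z) ∈ ℝ³ its Fréchet derivative Df(q,p,z) : ℝ³ → ℝ⁴ is an injective linear map (i.e., f is a smooth immersion). -/
open Real

/-- λ(q,p,z) = (1 + p²/4 + z²)^(−1/2) -/
noncomputable def lam (q p z : ℝ) : ℝ := (Real.sqrt (1 + p ^ 2 / 4 + z ^ 2))⁻¹

/-- f(q,p,z) = λ·(p/2·sin q − z·cos q, cos q, sin q, p/2·cos q + z·sin q) ∈ ℝ⁴,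
as a map on ℝ³ = ℝ × ℝ × ℝ. -/
noncomputable def f (x : ℝ × ℝ × ℝ) : EuclideanSpace ℝ (Fin 4) :=
  lam x.1 x.2.1 x.2.2 •
    (WithLp.equiv 2 (Fin 4 → ℝ)).symm
      ![x.2.1 / 2 * Real.sin x.1 - x.2.2 * Real.cos x.1, Real.cos x.1, Real.sin x.1,
        x.2.1 / 2 * Real.cos x.1 + x.2.2 * Real.sin x.1]

theorem lam_contDiff : ContDiff ℝ (⊤ : ℕ∞) (fun x : ℝ × ℝ × ℝ => lam x.1 x.2.1 x.2.2) := by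
  unfold lam
  have h : ∀ x : ℝ × ℝ × ℝ, 0 < 1 + x.2.1 ^ 2 / 4 + x.2.2 ^ 2 := fun x => by positivity
  apply ContDiff.inv
  · apply ContDiff.sqrt
    · fun_prop
    · exact fun x => (h x).ne'
  · exact fun x => (Real.sqrt_pos.2 (h x)).ne'

theorem f_contDiff : ContDiff ℝ (⊤ : ℕ∞) f := by
  rw [contDiff_euclidean]
  have hl := lam_contDiff
  intro i
  fin_cases i <;> simp [f] <;> fun_prop

/-- f is C^∞ and its Fréchet derivative is injective at every point;
i.e., f is a smooth immersion. -/
theorem f_smooth_immersion :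
    ContDiff ℝ (⊤ : ℕ∞) f ∧ ∀ x : ℝ × ℝ × ℝ, Function.Injective (fderiv ℝ f x) := by
  refine ⟨f_contDiff, ?_⟩
  rintro ⟨q, p, z⟩
  rw [injective_iff_map_eq_zero]
  rintro ⟨a, b, c⟩ hv
  have hcurve : HasDerivAt (fun t : ℝ => ((q + t * a, p + t * b, z + t * c) : ℝ × ℝ × ℝ))
      (a, b, c) 0 := by
    have h : ∀ u w : ℝ, HasDerivAt (fun t : ℝ => u + t * w) w 0 := fun u w => by
      simpa using ((hasDerivAt_id (0:ℝ)).mul_const w).const_add u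
    exact (h q a).prodMk ((h p b).prodMk (h z c))
  have hq : HasDerivAt (fun t : ℝ => q + t * a) a 0 := by
    simpa using ((hasDerivAt_id (0:ℝ)).mul_const a).const_add q
  have hp : HasDerivAt (fun t : ℝ => p + t * b) b 0 := by
    simpa using ((hasDerivAt_id (0:ℝ)).mul_const b).const_add p
  have hz : HasDerivAt (fun t : ℝ => z + t * c) c 0 := by
    simpa using ((hasDerivAt_id (0:ℝ)).mul_const c).const_add z
  have hfd : HasFDerivAt f (fderiv ℝ f (q, p, z)) (q + 0 * a, p + 0 * b, z + 0 * c) := by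
    have := (f_contDiff.differentiable (by simp) (q, p, z)).hasFDerivAt
    simpa using this
  have hf := hfd.comp_hasDerivAt (0:ℝ) hcurve
  rw [hv] at hf
  have hfi : ∀ i : Fin 4, HasDerivAt
      (fun t : ℝ => f (q + t * a, p + t * b, z + t * c) i) 0 0 := fun i => by
    have := (EuclideanSpace.proj i : EuclideanSpace ℝ (Fin 4) →L[ℝ] ℝ).hasFDerivAt.comp_hasDerivAt
      (0:ℝ) hf
    simpa [Function.comp_def] using this
  obtain ⟨l, hl⟩ : ∃ l, HasDerivAt
      (fun t : ℝ => lam (q + t * a) (p + t * b) (z + t * c)) l 0 :=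
    ⟨_, ((lam_contDiff.differentiable (by simp) _).hasFDerivAt.comp_hasDerivAt (0:ℝ) hcurve)⟩
  have hpos : 0 < lam q p z := by unfold lam; positivity
  have hc := hq.cos
  have hs := hq.sin
  have e0 := (hfi 0).unique (hl.mul (((hp.div_const 2).mul hs).sub (hz.mul hc)))
  have e1 := (hfi 1).unique (hl.mul hc)
  have e2 := (hfi 2).unique (hl.mul hs)
  have e3 := (hfi 3).unique (hl.mul (((hp.div_const 2).mul hc).add (hz.mul hs)))
  simp only [zero_mul, add_zero] at e0 e1 e2 e3
  have sc := Real.sin_sq_add_cos_sq q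
  generalize Real.sin q = S at *
  generalize Real.cos q = C at *
  generalize lam q p z = L at *
  change 0 = l * (p / 2 * S - z * C) + _ at e0
  change 0 = l * C + _ at e1
  change 0 = l * S + _ at e2
  change 0 = l * (p / 2 * C + z * S) + _ at e3
  have hl0 : l = 0 := by linear_combination (-l) * sc - C * e1 - S * e2
  have ha : a = 0 := by
    have : L * a = 0 := by linear_combination (-L * a) * sc + S * e1 - C * e2
    exact (mul_eq_zero.1 this).resolve_left hpos.ne'
  subst hl0 ha
  have hb : b = 0 := by
    have : L * b = 0 := by linear_combination (-L * b) * sc - 2 * S * e0 - 2 * C * e3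
    exact (mul_eq_zero.1 this).resolve_left hpos.ne'
  have hc : c = 0 := by
    have : L * c = 0 := by linear_combination (-L * c) * sc + C * e0 - S * e3
    exact (mul_eq_zero.1 this).resolve_left hpos.ne'
  simp [hb, hc]
end

section
/- For every (q,p,z) ∈ ℝ³ and every tangent vector (a,b,c) ∈ ℝ³, one has α_{f(q,p,z)}(Df(q,p,z)(a,b,c)) = λ(q,p,z)²·(c − p·a), where Df(q,p,z) is the Fréchet derivative of f at (q,p,z). That is, f pulls back the 1-form x₁dy₁ − y₁dx₁ + x₂dy₂ − y₂dx₂ to λ²·(dz − p dq), a positive function times the standard contact form of J¹(S¹); hence f is a contactomorphism from (J¹(S¹),ξ₁) onto (S³ \ K₀, ξ₀). -/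
open Real

/-- The standard contact form α of ℝ⁴ evaluated at w:
α_w(v) = w₁v₂ − w₂v₁ + w₃v₄ − w₄v₃. -/
def alpha (w v : EuclideanSpace ℝ (Fin 4)) : ℝ :=
  w 0 * v 1 - w 1 * v 0 + w 2 * v 3 - w 3 * v 2

theorem lam_differentiable : Differentiable ℝ (fun x : ℝ × ℝ × ℝ => lam x.1 x.2.1 x.2.2) := by
  intro x
  have h : (0:ℝ) < 1 + x.2.1 ^ 2 / 4 + x.2.2 ^ 2 := by positivity
  have h' : Real.sqrt (1 + x.2.1 ^ 2 / 4 + x.2.2 ^ 2) ≠ 0 := (Real.sqrt_pos.mpr h).ne'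
  unfold lam
  exact DifferentiableAt.inv (DifferentiableAt.sqrt (by fun_prop) h.ne') h'

theorem f_differentiable : Differentiable ℝ f := by
  have hl := lam_differentiable
  rw [differentiable_euclidean]
  intro i
  fin_cases i <;> simp [f] <;> fun_prop

/-- f pulls back the standard contact form of ℝ⁴ to λ²·(dz − p dq). -/
theorem f_pullback_contact_form (q p z a b c : ℝ) :
    alpha (f (q, p, z)) (fderiv ℝ f (q, p, z) (a, b, c)) =
      (lam q p z) ^ 2 * (c - p * a) := by
  have hq : HasDerivAt (fun t : ℝ => q + t * a) a 0 := by
    simpa using ((hasDerivAt_id (0:ℝ)).mul_const a).const_add q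
  have hp : HasDerivAt (fun t : ℝ => p + t * b) b 0 := by
    simpa using ((hasDerivAt_id (0:ℝ)).mul_const b).const_add p
  have hz : HasDerivAt (fun t : ℝ => z + t * c) c 0 := by
    simpa using ((hasDerivAt_id (0:ℝ)).mul_const c).const_add z
  have hγ : HasDerivAt (fun t : ℝ => (q + t * a, p + t * b, z + t * c)) (a, b, c) 0 :=
    hq.prodMk (hp.prodMk hz)
  have e0 : (fun t : ℝ => (q + t * a, p + t * b, z + t * c)) 0 = (q, p, z) := by simp
  have hf : HasDerivAt (fun t : ℝ => f (q + t * a, p + t * b, z + t * c))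
      (fderiv ℝ f (q, p, z) (a, b, c)) 0 := by
    have := (f_differentiable (q, p, z)).hasFDerivAt
    rw [← e0] at this
    have h := this.comp_hasDerivAt (0:ℝ) hγ
    rw [e0] at h
    exact h
  obtain ⟨l, hl⟩ : ∃ l, HasDerivAt
      (fun t : ℝ => lam (q + t * a) (p + t * b) (z + t * c)) l 0 := by
    have := (lam_differentiable (q, p, z)).hasFDerivAt
    rw [← e0] at this
    have h := this.comp_hasDerivAt (0:ℝ) hγ
    exact ⟨_, h⟩
  have hi : ∀ i, HasDerivAt (fun t : ℝ => f (q + t * a, p + t * b, z + t * c) i)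
      (fderiv ℝ f (q, p, z) (a, b, c) i) 0 := fun i => by
    have h := (EuclideanSpace.proj i : EuclideanSpace ℝ (Fin 4) →L[ℝ] ℝ).hasFDerivAt.comp_hasDerivAt
      (0:ℝ) hf
    exact h
  have h0 := (hi 0).unique (f := fun t : ℝ => f (q + t * a, p + t * b, z + t * c) 0)
    (hl.mul (((hp.div_const 2).mul hq.sin).sub (hz.mul hq.cos)))
  have h1 := (hi 1).unique (f := fun t : ℝ => f (q + t * a, p + t * b, z + t * c) 1)
    (hl.mul hq.cos)
  have h2 := (hi 2).unique (f := fun t : ℝ => f (q + t * a, p + t * b, z + t * c) 2)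
    (hl.mul hq.sin)
  have h3 := (hi 3).unique (f := fun t : ℝ => f (q + t * a, p + t * b, z + t * c) 3)
    (hl.mul (((hp.div_const 2).mul hq.cos).add (hz.mul hq.sin)))
  unfold alpha
  rw [h0, h1, h2, h3]
  simp [f]
  linear_combination (lam q p z) ^ 2 * (c - p * a) * Real.sin_sq_add_cos_sq q
end

section
/- For every (q,p,z) ∈ ℝ³, the image of the coordinate vector ∂_p under the derivative of f is given by Df(q,p,z)(0,1,0) = (λ(q,p,z)²/2)·(e₂(f(q,p,z)) − z·e₁(f(q,p,z))), where Df(q,p,z) is the Fréchet derivative of f at (q,p,z). -/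
open Real

/-- e₁(w) = (−w₄, −w₃, w₂, w₁). -/
noncomputable def e₁ (w : EuclideanSpace ℝ (Fin 4)) : EuclideanSpace ℝ (Fin 4) :=
  (WithLp.equiv 2 (Fin 4 → ℝ)).symm ![-(w 3), -(w 2), w 1, w 0]

/-- e₂(w) = (w₃, −w₄, −w₁, w₂). -/
noncomputable def e₂ (w : EuclideanSpace ℝ (Fin 4)) : EuclideanSpace ℝ (Fin 4) :=
  (WithLp.equiv 2 (Fin 4 → ℝ)).symm ![w 2, -(w 3), -(w 0), w 1]

theorem lam_hasDerivAt (q p z : ℝ) :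
    HasDerivAt (fun t : ℝ => lam q t z) (-(p / 4) * lam q p z ^ 3) p := by
  have hpos : 0 < 1 + p ^ 2 / 4 + z ^ 2 := by positivity
  have h1 : HasDerivAt (fun t : ℝ => 1 + t ^ 2 / 4 + z ^ 2) (p / 2) p := by
    have := (((hasDerivAt_id p).pow 2).div_const 4).const_add 1 |>.add_const (z ^ 2)
    refine this.congr_deriv ?_
    simp
    ring
  have h2 := (h1.sqrt hpos.ne').inv (Real.sqrt_pos.2 hpos).ne'
  have hs := (Real.sqrt_pos.2 hpos).ne'
  refine h2.congr_deriv ?_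
  unfold lam
  field_simp
  ring

/-- The pushforward of ∂_p under f equals (λ²/2)·(e₂ − z·e₁) at f(q,p,z). -/
theorem f_pushforward_dp (q p z : ℝ) :
    fderiv ℝ f (q, p, z) (0, 1, 0) =
      ((lam q p z) ^ 2 / 2) • (e₂ (f (q, p, z)) - z • e₁ (f (q, p, z))) := by
  have hc : HasDerivAt (fun t : ℝ => ((q, t, z) : ℝ × ℝ × ℝ)) (0, 1, 0) p :=
    (hasDerivAt_const p q).prodMk ((hasDerivAt_id p).prodMk (hasDerivAt_const p z))
  have hf := (f_differentiable (q, p, z)).hasFDerivAt.comp_hasDerivAt p hc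
  have hL := lam_hasDerivAt q p z
  have hl : lam q p z ^ 2 * (1 + p ^ 2 / 4 + z ^ 2) = 1 := by
    have hpos : 0 < 1 + p ^ 2 / 4 + z ^ 2 := by positivity
    unfold lam
    rw [inv_pow, Real.sq_sqrt hpos.le, inv_mul_cancel₀ hpos.ne']
  have hh : HasDerivAt (fun t : ℝ => t / 2) (1 / 2) p := (hasDerivAt_id p).div_const 2
  ext i
  have hi : HasDerivAt (fun t : ℝ => f (q, t, z) i) (fderiv ℝ f (q, p, z) (0, 1, 0) i) p :=
    (EuclideanSpace.proj i : EuclideanSpace ℝ (Fin 4) →L[ℝ] ℝ).hasFDerivAt.comp_hasDerivAt p hf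
  refine hi.unique ?_
  clear hi hf hc
  fin_cases i <;> simp [f, e₁, e₂]
  · refine (hL.mul ((hh.mul_const (sin q)).sub_const (z * cos q))).congr_deriv ?_
    linear_combination (-(lam q p z * sin q) / 2) * hl
  · refine (hL.mul_const (cos q)).congr_deriv ?_
    ring
  · refine (hL.mul_const (sin q)).congr_deriv ?_
    ring
  · refine (hL.mul ((hh.mul_const (cos q)).add_const (z * sin q))).congr_deriv ?_
    linear_combination (-(lam q p z * cos q) / 2) * hl
end

section
/- For every (q,x,y) ∈ ℝ³ and every tangent vector (a,b,c) ∈ ℝ³, one has α_{g(q,x,y)}(Dg(q,x,y)(a,b,c)) = (cos(2q)·b − sin(2q)·c)/(1 + x² + y²), where Dg(q,x,y) is the Fréchet derivative of g at (q,x,y). That is, g pulls back the standard contact form of ℝ⁴ to a positive function times cos(2q) dx − sin(2q) dy. -/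
open Real

/-- g(q,x,y) = (1+x²+y²)^(−1/2)·(−x·cos q + y·sin q, cos q, sin q, −x·sin q − y·cos q),
as a map on ℝ³ = ℝ × ℝ × ℝ. -/
noncomputable def g (w : ℝ × ℝ × ℝ) : EuclideanSpace ℝ (Fin 4) :=
  (Real.sqrt (1 + w.2.1 ^ 2 + w.2.2 ^ 2))⁻¹ •
    (WithLp.equiv 2 (Fin 4 → ℝ)).symm
      ![-w.2.1 * Real.cos w.1 + w.2.2 * Real.sin w.1, Real.cos w.1, Real.sin w.1,
        -w.2.1 * Real.sin w.1 - w.2.2 * Real.cos w.1]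

/-- g is differentiable everywhere. -/
theorem g_differentiable : Differentiable ℝ g := by
  rw [differentiable_euclidean]
  intro i w
  have hpos : (1 + w.2.1 ^ 2 + w.2.2 ^ 2 : ℝ) ≠ 0 := by positivity
  have hs : Real.sqrt (1 + w.2.1 ^ 2 + w.2.2 ^ 2) ≠ 0 := by positivity
  have hR : DifferentiableAt ℝ
      (fun w : ℝ × ℝ × ℝ => (Real.sqrt (1 + w.2.1 ^ 2 + w.2.2 ^ 2))⁻¹) w :=
    DifferentiableAt.inv (DifferentiableAt.sqrt (by fun_prop) hpos) hs
  fin_cases i <;> simp [g] <;> exact hR.mul (by fun_prop)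

/-- g pulls back the standard contact form of ℝ⁴ to
(cos(2q) dx − sin(2q) dy)/(1 + x² + y²). -/
theorem g_pullback_contact_form (q x y a b c : ℝ) :
    alpha (g (q, x, y)) (fderiv ℝ g (q, x, y) (a, b, c)) =
      (Real.cos (2 * q) * b - Real.sin (2 * q) * c) / (1 + x ^ 2 + y ^ 2) := by
  have hq : HasDerivAt (fun t : ℝ => q + t * a) a 0 := by
    simpa using ((hasDerivAt_id (0 : ℝ)).mul_const a).const_add q
  have hx : HasDerivAt (fun t : ℝ => x + t * b) b 0 := by
    simpa using ((hasDerivAt_id (0 : ℝ)).mul_const b).const_add x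
  have hy : HasDerivAt (fun t : ℝ => y + t * c) c 0 := by
    simpa using ((hasDerivAt_id (0 : ℝ)).mul_const c).const_add y
  have hcurve : HasDerivAt (fun t : ℝ => ((q + t * a, x + t * b, y + t * c) : ℝ × ℝ × ℝ))
      (a, b, c) 0 := hq.prodMk (hx.prodMk hy)
  have hg : HasFDerivAt g (fderiv ℝ g (q, x, y))
      ((fun t : ℝ => ((q + t * a, x + t * b, y + t * c) : ℝ × ℝ × ℝ)) 0) := by
    simpa using (g_differentiable (q, x, y)).hasFDerivAt
  have hcomp := hg.comp_hasDerivAt (0 : ℝ) hcurve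
  have hi : ∀ i : Fin 4, HasDerivAt
      (fun t : ℝ => g (q + t * a, x + t * b, y + t * c) i)
      (fderiv ℝ g (q, x, y) (a, b, c) i) 0 := fun i : Fin 4 =>
    ((EuclideanSpace.proj i : EuclideanSpace ℝ (Fin 4) →L[ℝ] ℝ).hasFDerivAt).comp_hasDerivAt
      (0 : ℝ) hcomp
  obtain ⟨D, hD⟩ : ∃ D, HasDerivAt
      (fun t : ℝ => (Real.sqrt (1 + (x + t * b) ^ 2 + (y + t * c) ^ 2))⁻¹) D 0 := by
    refine ⟨_, DifferentiableAt.hasDerivAt ?_⟩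
    exact DifferentiableAt.inv (DifferentiableAt.sqrt (by fun_prop) (by positivity))
      (by positivity)
  have h0 := (hi 0).unique ((hD.mul ((hx.neg.mul hq.cos).add (hy.mul hq.sin))).congr_of_eventuallyEq
    (.of_forall fun t => by simp [g]; left; ring))
  have h1 := (hi 1).unique ((hD.mul hq.cos).congr_of_eventuallyEq
    (.of_forall fun t => by simp [g]))
  have h2 := (hi 2).unique ((hD.mul hq.sin).congr_of_eventuallyEq
    (.of_forall fun t => by simp [g]))
  have h3 := (hi 3).unique ((hD.mul ((hx.neg.mul hq.sin).sub (hy.mul hq.cos))).congr_of_eventuallyEq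
    (.of_forall fun t => by simp [g]; left; ring))
  have hpos : (0 : ℝ) < 1 + x ^ 2 + y ^ 2 := by positivity
  have hr : (Real.sqrt (1 + x ^ 2 + y ^ 2))⁻¹ ^ 2 = (1 + x ^ 2 + y ^ 2)⁻¹ := by
    rw [inv_pow, Real.sq_sqrt hpos.le]
  rw [alpha, h0, h1, h2, h3, div_eq_mul_inv, ← hr, Real.cos_two_mul', Real.sin_two_mul]
  simp [g, -inv_pow]
  generalize (Real.sqrt (1 + x ^ 2 + y ^ 2))⁻¹ = r
  have hcs := Real.sin_sq_add_cos_sq q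
  linear_combination (0:ℝ) * hcs
end
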